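/- arXiv:2205.03851 — 2 statements merged into one kernel-verified Lean document; each statement's English description precedes it below -/
import Mathlib

section
/- Let m, n, N, N' be positive integers, let (x_{i,j})_{0≤i≤m,0≤j≤n} be nonnegative integers with Σ_{i,j} x_{i,j} = N, set x_i = Σ_{j=0}^n x_{i,j}, and let (y_i)_{0≤i≤m} be nonnegative integers with Σ_i y_i = N'. Consider the parameter domain consisting of (q_i)_{0≤i≤m} in the open m-dimensional probability simplex together with, for each i, (r_{i,j})_{0≤j≤n} in the open n-dimensional probability simplex (each simplex parameterized by all but one coordinate, with Lebesgue measure), and the density f(q, r) = ∏_{i=0}^m q_i^{x_i + y_i + (1+n)/2 − 1} · ∏_{i=0}^m ∏_{j=0}^n r_{i,j}^{x_{i,j} − 1/2}. Then for any indices (i₀, j₀), ∫ q_{i₀} r_{i₀,j₀} f(q,r) d(q,r) / ∫ f(q,r) d(q,r) = [(x_{i₀} + y_{i₀} + (1+n)/2)/(N + N' + (1+m)(1+n)/2)] · [(x_{i₀,j₀} + 1/2)/(x_{i₀} + (1+n)/2)]. (This is the Bayes estimator of p_{i₀,j₀} = q_{i₀} r_{i₀,j₀} under entropy loss with respect to the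 Jeffreys prior and the direct and aggregated observations.) -/
open Finset MeasureTheory

/-- Fill in the removed coordinate of the simplex parameterization:
the coordinate `k₁` is set to `1 - (sum of the other coordinates)`. -/
noncomputable def extendSimplex {ι : Type*} [Fintype ι] [DecidableEq ι] (k₁ : ι)
    (u : {k : ι // k ≠ k₁} → ℝ) : ι → ℝ :=
  fun k => if h : k = k₁ then 1 - ∑ k', u k' else u ⟨k, h⟩

/-- The open probability simplex, parameterized by all coordinates but `k₁`. -/
def simplexSet {ι : Type*} [Fintype ι] [DecidableEq ι] (k₁ : ι) :
    Set ({k : ι // k ≠ k₁} → ℝ) :=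
  {u | (∀ k, 0 < u k) ∧ ∑ k, u k < 1}

/-- The density `∏ i q_i^{x_i + y_i + (1+n)/2 - 1} ∏ i ∏ j r_{i,j}^{x_{i,j} - 1/2}`
(Jeffreys posterior, up to normalization), in the parameterization of the simplexes
by all but one coordinate. -/
noncomputable def jeffreysDensity (m n N N' : ℕ) (x : Fin (m+1) → Fin (n+1) → ℕ)
    (y : Fin (m+1) → ℕ)
    (u : ({i : Fin (m+1) // i ≠ 0} → ℝ) × (Fin (m+1) → ({j : Fin (n+1) // j ≠ 0} → ℝ))) : ℝ :=
  (∏ i : Fin (m+1),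
      (extendSimplex (0 : Fin (m+1)) u.1 i) ^
        (((∑ j, x i j : ℕ) : ℝ) + (y i : ℝ) + (1 + n) / 2 - 1)) *
    ∏ i : Fin (m+1), ∏ j : Fin (n+1),
      (extendSimplex (0 : Fin (n+1)) (u.2 i) j) ^ ((x i j : ℝ) - 1/2)

/-!
The `m`-simplex and the `n`-simplices decouple, so the posterior is a product of Dirichlet
distributions, and each factor of `q i₀ * r i₀ j₀` has mean (its parameter) / (sum of parameters).

Multiplying a Dirichlet weight by the coordinate `k` raises the parameter `a k` by one, so the mean
of a Dirichlet distribution follows from `Γ (z + 1) = z * Γ z` and Dirichlet's integral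
`(∏ k, Γ (a k)) / Γ (∑ k, a k)`. The latter comes from integrating
`exp (-s) * (s - ∑ k, u k) ^ (b - 1) * ∏ k, u k ^ (c k - 1)` over the cone `∑ k, u k < s`, `0 < u k`
in the two possible orders: integrating in `s` first splits the integral into Gamma integrals, while
integrating in `u` first gives a multiple of a single Gamma integral by homogeneity.
-/

/-- The power function `t ↦ t ^ (b - 1)` on the positive half-line, extended by zero to `ℝ`. It is
the Gamma density of shape `b` without its exponential factor and normalization. -/
noncomputable def posRpow (b : ℝ) : ℝ → ℝ :=
  (Set.Ioi 0).indicator fun t => t ^ (b - 1)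

section PosRpow

variable {b t : ℝ}

lemma posRpow_of_pos (ht : 0 < t) : posRpow b t = t ^ (b - 1) :=
  Set.indicator_of_mem ht _

lemma posRpow_of_nonpos (ht : t ≤ 0) : posRpow b t = 0 :=
  Set.indicator_of_notMem ht.not_gt _

lemma posRpow_nonneg (b t : ℝ) : 0 ≤ posRpow b t :=
  Set.indicator_nonneg (fun _ ht => Real.rpow_nonneg (le_of_lt ht) _) t

@[fun_prop]
lemma measurable_posRpow (b : ℝ) : Measurable (posRpow b) :=
  Measurable.indicator (by fun_prop) measurableSet_Ioi

lemma posRpow_mul {s : ℝ} (hs : 0 < s) (b t : ℝ) :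
    posRpow b (s * t) = s ^ (b - 1) * posRpow b t := by
  rcases le_or_gt t 0 with ht | ht
  · rw [posRpow_of_nonpos ht, posRpow_of_nonpos (mul_nonpos_of_nonneg_of_nonpos hs.le ht), mul_zero]
  · rw [posRpow_of_pos ht, posRpow_of_pos (mul_pos hs ht), Real.mul_rpow hs.le ht.le]

lemma exp_neg_mul_posRpow (b : ℝ) :
    (fun t => Real.exp (-t) * posRpow b t) =
      (Set.Ioi 0).indicator fun t => Real.exp (-t) * t ^ (b - 1) :=
  funext fun _ => (Set.indicator_mul_right _ (fun t => Real.exp (-t)) _).symm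

lemma integrable_exp_neg_mul_posRpow (hb : 0 < b) :
    Integrable fun t => Real.exp (-t) * posRpow b t := by
  rw [exp_neg_mul_posRpow, integrable_indicator_iff measurableSet_Ioi]
  exact Real.GammaIntegral_convergent hb

lemma integral_exp_neg_mul_posRpow (hb : 0 < b) :
    ∫ t, Real.exp (-t) * posRpow b t = Real.Gamma b := by
  rw [exp_neg_mul_posRpow, integral_indicator measurableSet_Ioi, Real.Gamma_eq_integral hb]

end PosRpow

/-- The Dirichlet weight `(s - ∑ k, u k) ^ (b - 1) * ∏ k, u k ^ (c k - 1)` on the open simplex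
`{u | (∀ k, 0 < u k) ∧ ∑ k, u k < s}`, extended by zero. Here `b` is the parameter of the
coordinate that the parameterization leaves out. -/
noncomputable def dirichletKernel {κ : Type*} [Fintype κ] (b : ℝ) (c : κ → ℝ) (s : ℝ)
    (u : κ → ℝ) : ℝ :=
  posRpow b (s - ∑ k, u k) * ∏ k, posRpow (c k) (u k)

section DirichletKernel

variable {κ : Type*} [Fintype κ] {b : ℝ} {c : κ → ℝ}

lemma dirichletKernel_nonneg (b : ℝ) (c : κ → ℝ) (s : ℝ) (u : κ → ℝ) :
    0 ≤ dirichletKernel b c s u :=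
  mul_nonneg (posRpow_nonneg _ _) (prod_nonneg fun _ _ => posRpow_nonneg _ _)

lemma measurable_dirichletKernel (b : ℝ) (c : κ → ℝ) :
    Measurable fun p : ℝ × (κ → ℝ) => dirichletKernel b c p.1 p.2 := by
  unfold dirichletKernel
  fun_prop

lemma dirichletKernel_eq_zero {s : ℝ} {u : κ → ℝ} (hu : ¬((∀ k, 0 < u k) ∧ ∑ k, u k < s)) :
    dirichletKernel b c s u = 0 := by
  by_cases hpos : ∀ k, 0 < u k
  · have hsum : s ≤ ∑ k, u k := not_lt.1 fun hlt => hu ⟨hpos, hlt⟩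
    rw [dirichletKernel, posRpow_of_nonpos (sub_nonpos.2 hsum), zero_mul]
  · obtain ⟨k, hk⟩ := not_forall.1 hpos
    rw [dirichletKernel, prod_eq_zero (mem_univ k) (posRpow_of_nonpos (not_lt.1 hk)), mul_zero]

lemma dirichletKernel_of_nonpos {s : ℝ} (hs : s ≤ 0) (u : κ → ℝ) :
    dirichletKernel b c s u = 0 :=
  dirichletKernel_eq_zero fun ⟨hpos, hlt⟩ =>
    (hlt.trans_le hs).not_ge (sum_nonneg fun k _ => (hpos k).le)

lemma dirichletKernel_smul {s : ℝ} (hs : 0 < s) (u : κ → ℝ) :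
    dirichletKernel b c s (s • u) =
      s ^ (b - 1 + ∑ k, (c k - 1)) * dirichletKernel b c 1 u := by
  have hlast : s - ∑ k, (s • u) k = s * (1 - ∑ k, u k) := by
    simp [mul_sub, mul_sum]
  rw [dirichletKernel, hlast]
  simp only [dirichletKernel, Pi.smul_apply, smul_eq_mul, posRpow_mul hs, prod_mul_distrib,
    Real.rpow_add hs, Real.rpow_sum_of_pos hs]
  ring

lemma integral_dirichletKernel {s : ℝ} (hs : 0 < s) :
    ∫ u, dirichletKernel b c s u =
      s ^ (b + ∑ k, c k - 1) * ∫ u, dirichletKernel b c 1 u := by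
  have hscale := Measure.integral_comp_smul_of_nonneg volume (dirichletKernel b c s) s (hR := hs.le)
  simp only [dirichletKernel_smul hs, integral_const_mul, Module.finrank_fintype_fun_eq_card,
    smul_eq_mul] at hscale
  rw [eq_inv_mul_iff_mul_eq₀ (pow_ne_zero _ hs.ne'), ← mul_assoc, ← Real.rpow_natCast,
    ← Real.rpow_add hs] at hscale
  rw [← hscale, sum_sub_distrib]
  congr 2
  simp only [sum_const, card_univ, nsmul_eq_mul, mul_one]
  ring

lemma exp_neg_mul_dirichletKernel (b : ℝ) (c : κ → ℝ) (s : ℝ) (u : κ → ℝ) :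
    Real.exp (-s) * dirichletKernel b c s u =
      Real.exp (-(s - ∑ k, u k)) * posRpow b (s - ∑ k, u k) *
        ∏ k, Real.exp (-u k) * posRpow (c k) (u k) := by
  have hexp : Real.exp (-s) = Real.exp (-(s - ∑ k, u k)) * ∏ k, Real.exp (-u k) := by
    rw [← Real.exp_sum, ← Real.exp_add, sum_neg_distrib]
    ring_nf
  rw [dirichletKernel, prod_mul_distrib, hexp]
  ring

lemma integral_exp_neg_mul_dirichletKernel (hb : 0 < b) (c : κ → ℝ) (u : κ → ℝ) :
    ∫ s, Real.exp (-s) * dirichletKernel b c s u =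
      Real.Gamma b * ∏ k, Real.exp (-u k) * posRpow (c k) (u k) := by
  simp only [exp_neg_mul_dirichletKernel, integral_mul_const]
  rw [integral_sub_right_eq_self (fun s => Real.exp (-s) * posRpow b s),
    integral_exp_neg_mul_posRpow hb]

lemma integrable_exp_neg_mul_dirichletKernel (hb : 0 < b) (hc : ∀ k, 0 < c k) :
    Integrable fun p : ℝ × (κ → ℝ) => Real.exp (-p.1) * dirichletKernel b c p.1 p.2 := by
  have hmeas : Measurable fun p : ℝ × (κ → ℝ) =>
      Real.exp (-p.1) * dirichletKernel b c p.1 p.2 :=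
    (by fun_prop : Measurable fun p : ℝ × (κ → ℝ) => Real.exp (-p.1)).mul
      (measurable_dirichletKernel b c)
  refine (integrable_prod_iff' hmeas.aestronglyMeasurable).2 ⟨.of_forall fun u => ?_, ?_⟩
  · simp only [exp_neg_mul_dirichletKernel]
    exact ((integrable_exp_neg_mul_posRpow hb).comp_sub_right _).mul_const _
  · have hnorm (s : ℝ) (u : κ → ℝ) : ‖Real.exp (-s) * dirichletKernel b c s u‖ =
        Real.exp (-s) * dirichletKernel b c s u :=
      Real.norm_of_nonneg (mul_nonneg (Real.exp_nonneg _) (dirichletKernel_nonneg b c s u))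
    simp only [hnorm, integral_exp_neg_mul_dirichletKernel hb]
    exact (Integrable.fintype_prod fun k => integrable_exp_neg_mul_posRpow (hc k)).const_mul _

lemma Gamma_mul_integral_dirichletKernel_one (hb : 0 < b) (hc : ∀ k, 0 < c k) :
    Real.Gamma (b + ∑ k, c k) * ∫ u, dirichletKernel b c 1 u =
      Real.Gamma b * ∏ k, Real.Gamma (c k) := by
  have hpos : 0 < b + ∑ k, c k := add_pos_of_pos_of_nonneg hb (sum_nonneg fun k _ => (hc k).le)
  have hslice (s : ℝ) : ∫ u, Real.exp (-s) * dirichletKernel b c s u =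
      Real.exp (-s) * posRpow (b + ∑ k, c k) s * ∫ u, dirichletKernel b c 1 u := by
    rcases le_or_gt s 0 with hs | hs
    · simp [dirichletKernel_of_nonpos hs, posRpow_of_nonpos hs]
    · rw [integral_const_mul, integral_dirichletKernel hs, posRpow_of_pos hs, mul_assoc]
  calc Real.Gamma (b + ∑ k, c k) * ∫ u, dirichletKernel b c 1 u
      = ∫ s, ∫ u, Real.exp (-s) * dirichletKernel b c s u := by
        simp only [hslice, integral_mul_const, integral_exp_neg_mul_posRpow hpos]
    _ = ∫ u, ∫ s, Real.exp (-s) * dirichletKernel b c s u :=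
        integral_integral_swap (integrable_exp_neg_mul_dirichletKernel hb hc)
    _ = Real.Gamma b * ∏ k, Real.Gamma (c k) := by
        simp only [integral_exp_neg_mul_dirichletKernel hb, integral_const_mul]
        rw [integral_fintype_prod_volume_eq_prod fun k t => Real.exp (-t) * posRpow (c k) t]
        simp only [integral_exp_neg_mul_posRpow (hc _)]

end DirichletKernel

/-- The multivariate Beta function, the normalizing constant of the Dirichlet distribution with
parameter `a`. -/
noncomputable def multivariateBeta {ι : Type*} [Fintype ι] (a : ι → ℝ) : ℝ :=
  (∏ k, Real.Gamma (a k)) / Real.Gamma (∑ k, a k)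

section MultivariateBeta

variable {ι : Type*} [Fintype ι] {a : ι → ℝ}

lemma multivariateBeta_pos [Nonempty ι] (ha : ∀ k, 0 < a k) : 0 < multivariateBeta a :=
  div_pos (prod_pos fun k _ => Real.Gamma_pos_of_pos (ha k))
    (Real.Gamma_pos_of_pos (sum_pos (fun k _ => ha k) univ_nonempty))

lemma multivariateBeta_add_single [DecidableEq ι] (ha : ∀ k, 0 < a k) (k₀ : ι) :
    multivariateBeta (a + Pi.single k₀ 1) = a k₀ / (∑ k, a k) * multivariateBeta a := by
  have hsum : 0 < ∑ k, a k := sum_pos (fun k _ => ha k) ⟨k₀, mem_univ k₀⟩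
  have hGamma (k : ι) : Real.Gamma ((a + Pi.single k₀ 1 : ι → ℝ) k) =
      Real.Gamma (a k) * if k = k₀ then a k else 1 := by
    rcases eq_or_ne k k₀ with rfl | hk
    · simp [Real.Gamma_add_one (ha k).ne', mul_comm]
    · simp [hk]
  have htotal : ∑ k, (a + Pi.single k₀ 1 : ι → ℝ) k = ∑ k, a k + 1 := by
    simp [sum_add_distrib]
  rw [multivariateBeta, multivariateBeta, htotal, Real.Gamma_add_one hsum.ne']
  simp only [hGamma, prod_mul_distrib, prod_ite_eq', mem_univ, if_true]
  rw [div_mul_div_comm, mul_comm (a k₀)]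

end MultivariateBeta

/-- The unnormalized density of the Dirichlet distribution with parameter `a`, in the
parameterization of the simplex by all coordinates but `k₁`. -/
noncomputable def dirichletWeight {ι : Type*} [Fintype ι] [DecidableEq ι] (k₁ : ι) (a : ι → ℝ)
    (u : {k : ι // k ≠ k₁} → ℝ) : ℝ :=
  ∏ k, extendSimplex k₁ u k ^ (a k - 1)

section DirichletWeight

variable {ι : Type*} [Fintype ι] [DecidableEq ι] {k₁ : ι} {a : ι → ℝ}

lemma measurableSet_simplexSet (k₁ : ι) : MeasurableSet (simplexSet k₁) := by
  unfold simplexSet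
  measurability

lemma extendSimplex_self (k₁ : ι) (u : {k : ι // k ≠ k₁} → ℝ) :
    extendSimplex k₁ u k₁ = 1 - ∑ k, u k :=
  dif_pos rfl

lemma extendSimplex_coe (u : {k : ι // k ≠ k₁} → ℝ) (k : {k : ι // k ≠ k₁}) :
    extendSimplex k₁ u k = u k :=
  dif_neg k.2

lemma extendSimplex_pos {u : {k : ι // k ≠ k₁} → ℝ} (hu : u ∈ simplexSet k₁) (k : ι) :
    0 < extendSimplex k₁ u k := by
  rcases eq_or_ne k k₁ with rfl | hk
  · rw [extendSimplex_self]
    exact sub_pos.2 hu.2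
  · exact (hu.1 ⟨k, hk⟩).trans_eq (extendSimplex_coe u ⟨k, hk⟩).symm

lemma dirichletKernel_one_eq_indicator (k₁ : ι) (a : ι → ℝ) :
    dirichletKernel (a k₁) (fun k : {k : ι // k ≠ k₁} => a k) 1 =
      (simplexSet k₁).indicator (dirichletWeight k₁ a) := by
  ext u
  by_cases hu : u ∈ simplexSet k₁
  · rw [Set.indicator_of_mem hu, dirichletWeight, Fintype.prod_eq_mul_prod_subtype_ne _ k₁,
      dirichletKernel, posRpow_of_pos (sub_pos.2 hu.2)]
    simp only [posRpow_of_pos (hu.1 _), extendSimplex_self, extendSimplex_coe]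
  · rw [Set.indicator_of_notMem hu, dirichletKernel_eq_zero hu]

lemma setIntegral_dirichletWeight (k₁ : ι) (ha : ∀ k, 0 < a k) :
    ∫ u in simplexSet k₁, dirichletWeight k₁ a u = multivariateBeta a := by
  have hGamma : 0 < Real.Gamma (∑ k, a k) :=
    Real.Gamma_pos_of_pos (sum_pos (fun k _ => ha k) ⟨k₁, mem_univ k₁⟩)
  rw [← integral_indicator (measurableSet_simplexSet k₁), ← dirichletKernel_one_eq_indicator,
    multivariateBeta, eq_div_iff hGamma.ne', mul_comm, Fintype.sum_eq_add_sum_subtype_ne _ k₁,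
    Gamma_mul_integral_dirichletKernel_one (ha k₁) fun k : {k : ι // k ≠ k₁} => ha k,
    Fintype.prod_eq_mul_prod_subtype_ne _ k₁]

lemma extendSimplex_mul_dirichletWeight {u : {k : ι // k ≠ k₁} → ℝ} (hu : u ∈ simplexSet k₁)
    (a : ι → ℝ) (k₀ : ι) :
    extendSimplex k₁ u k₀ * dirichletWeight k₁ a u =
      dirichletWeight k₁ (a + Pi.single k₀ 1) u := by
  have hpow (k : ι) : extendSimplex k₁ u k ^ ((a + Pi.single k₀ 1 : ι → ℝ) k - 1) =
      (if k = k₀ then extendSimplex k₁ u k else 1) * extendSimplex k₁ u k ^ (a k - 1) := by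
    rcases eq_or_ne k k₀ with rfl | hk
    · have hk := extendSimplex_pos hu k
      rw [if_pos rfl, mul_comm, ← Real.rpow_add_one hk.ne']
      simp
    · simp [hk]
  simp only [dirichletWeight, hpow, prod_mul_distrib, prod_ite_eq', mem_univ, if_true]

lemma setIntegral_extendSimplex_mul_dirichletWeight (k₁ : ι) (ha : ∀ k, 0 < a k) (k₀ : ι) :
    ∫ u in simplexSet k₁, extendSimplex k₁ u k₀ * dirichletWeight k₁ a u =
      a k₀ / (∑ k, a k) * multivariateBeta a := by
  have hpos (k : ι) : 0 < (a + Pi.single k₀ 1 : ι → ℝ) k :=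
    add_pos_of_pos_of_nonneg (ha k) ((Pi.single_nonneg (α := fun _ => ℝ)).2 zero_le_one k)
  rw [setIntegral_congr_fun (measurableSet_simplexSet k₁)
      fun u hu => extendSimplex_mul_dirichletWeight hu a k₀,
    setIntegral_dirichletWeight k₁ hpos, multivariateBeta_add_single ha]

end DirichletWeight

lemma setIntegral_fst_mul_prod_snd {α ι 𝕜 : Type*} [RCLike 𝕜] [Fintype ι] {β : ι → Type*}
    [MeasureSpace α] [SFinite (volume : Measure α)] [∀ i, MeasureSpace (β i)]
    [∀ i, SigmaFinite (volume : Measure (β i))] (s : Set α) (t : ∀ i, Set (β i))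
    (f : α → 𝕜) (g : ∀ i, β i → 𝕜) :
    ∫ u in {u : α × (∀ i, β i) | u.1 ∈ s ∧ ∀ i, u.2 i ∈ t i}, f u.1 * ∏ i, g i (u.2 i) =
      (∫ q in s, f q) * ∏ i, ∫ r in t i, g i r := by
  have hdomain : {u : α × (∀ i, β i) | u.1 ∈ s ∧ ∀ i, u.2 i ∈ t i} = s ×ˢ Set.univ.pi t := by
    ext u
    simp
  rw [hdomain, Measure.volume_eq_prod, setIntegral_prod_mul f fun v : ∀ i, β i => ∏ i, g i (v i),
    volume_pi, Measure.restrict_pi_pi, integral_fintype_prod_eq_prod]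

/-- The parameter domain: a point `q` of the open simplex on `ι` together with, for each `i : ι`, a
point `r i` of the open simplex on `κ`. It is reducible so that the set-builder expression for this
domain is recognized as it. -/
abbrev jointSimplexSet {ι κ : Type*} [Fintype ι] [DecidableEq ι] [Fintype κ] [DecidableEq κ]
    (k₁ : ι) (l₁ : κ) : Set (({i : ι // i ≠ k₁} → ℝ) × (ι → ({j : κ // j ≠ l₁} → ℝ))) :=
  {u | u.1 ∈ simplexSet k₁ ∧ ∀ i, u.2 i ∈ simplexSet l₁}

section JointSimplexSet

variable {ι κ : Type*} [Fintype ι] [DecidableEq ι] [Fintype κ] [DecidableEq κ]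
  {a : ι → ℝ} {b : ι → κ → ℝ}

lemma setIntegral_dirichletWeight_mul_prod (k₁ : ι) (l₁ : κ) (ha : ∀ i, 0 < a i)
    (hb : ∀ i j, 0 < b i j) :
    ∫ u in jointSimplexSet k₁ l₁,
        dirichletWeight k₁ a u.1 * ∏ i, dirichletWeight l₁ (b i) (u.2 i) =
      multivariateBeta a * ∏ i, multivariateBeta (b i) := by
  rw [setIntegral_fst_mul_prod_snd _ (fun _ => simplexSet l₁) (dirichletWeight k₁ a)
    fun i => dirichletWeight l₁ (b i)]
  simp only [setIntegral_dirichletWeight k₁ ha, setIntegral_dirichletWeight l₁ (hb _)]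

lemma setIntegral_extendSimplex_mul_dirichletWeight_mul_prod (k₁ : ι) (l₁ : κ)
    (ha : ∀ i, 0 < a i) (hb : ∀ i j, 0 < b i j) (i₀ : ι) (j₀ : κ) :
    ∫ u in jointSimplexSet k₁ l₁,
        extendSimplex k₁ u.1 i₀ * extendSimplex l₁ (u.2 i₀) j₀ *
          (dirichletWeight k₁ a u.1 * ∏ i, dirichletWeight l₁ (b i) (u.2 i)) =
      a i₀ / (∑ i, a i) * (b i₀ j₀ / ∑ j, b i₀ j) *
        (multivariateBeta a * ∏ i, multivariateBeta (b i)) := by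
  let g (i : ι) (r : {j : κ // j ≠ l₁} → ℝ) : ℝ :=
    (if i = i₀ then extendSimplex l₁ r j₀ else 1) * dirichletWeight l₁ (b i) r
  have hintegrand (u : ({i : ι // i ≠ k₁} → ℝ) × (ι → ({j : κ // j ≠ l₁} → ℝ))) :
      extendSimplex k₁ u.1 i₀ * extendSimplex l₁ (u.2 i₀) j₀ *
          (dirichletWeight k₁ a u.1 * ∏ i, dirichletWeight l₁ (b i) (u.2 i)) =
        extendSimplex k₁ u.1 i₀ * dirichletWeight k₁ a u.1 * ∏ i, g i (u.2 i) := by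
    simp only [g, prod_mul_distrib, prod_ite_eq', mem_univ, if_true]
    ring
  have hfactor (i : ι) : ∫ r in simplexSet l₁, g i r =
      (if i = i₀ then b i j₀ / ∑ j, b i j else 1) * multivariateBeta (b i) := by
    simp only [g]
    split_ifs
    · exact setIntegral_extendSimplex_mul_dirichletWeight l₁ (hb i) j₀
    · simp only [one_mul, setIntegral_dirichletWeight l₁ (hb i)]
  simp only [hintegrand]
  rw [setIntegral_fst_mul_prod_snd _ (fun _ => simplexSet l₁)
    (fun q => extendSimplex k₁ q i₀ * dirichletWeight k₁ a q) g,
    setIntegral_extendSimplex_mul_dirichletWeight k₁ ha]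
  simp only [hfactor, prod_mul_distrib, prod_ite_eq', mem_univ, if_true]
  exact mul_mul_mul_comm _ _ _ _

theorem mean_prod_dirichletWeight (k₁ : ι) (l₁ : κ) (ha : ∀ i, 0 < a i) (hb : ∀ i j, 0 < b i j)
    (i₀ : ι) (j₀ : κ) :
    (∫ u in jointSimplexSet k₁ l₁,
        extendSimplex k₁ u.1 i₀ * extendSimplex l₁ (u.2 i₀) j₀ *
          (dirichletWeight k₁ a u.1 * ∏ i, dirichletWeight l₁ (b i) (u.2 i))) /
      (∫ u in jointSimplexSet k₁ l₁,
        dirichletWeight k₁ a u.1 * ∏ i, dirichletWeight l₁ (b i) (u.2 i)) =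
      a i₀ / (∑ i, a i) * (b i₀ j₀ / ∑ j, b i₀ j) := by
  have : Nonempty ι := ⟨k₁⟩
  have : Nonempty κ := ⟨l₁⟩
  have hnormalizer : multivariateBeta a * ∏ i, multivariateBeta (b i) ≠ 0 :=
    (mul_pos (multivariateBeta_pos ha) (prod_pos fun i _ => multivariateBeta_pos (hb i))).ne'
  rw [setIntegral_extendSimplex_mul_dirichletWeight_mul_prod k₁ l₁ ha hb,
    setIntegral_dirichletWeight_mul_prod k₁ l₁ ha hb, mul_div_cancel_right₀ _ hnormalizer]

end JointSimplexSet

lemma jeffreysDensity_eq_mul_prod_dirichletWeight (m n N N' : ℕ) (x : Fin (m + 1) → Fin (n + 1) → ℕ)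
    (y : Fin (m + 1) → ℕ)
    (u : ({i : Fin (m + 1) // i ≠ 0} → ℝ) × (Fin (m + 1) → ({j : Fin (n + 1) // j ≠ 0} → ℝ))) :
    jeffreysDensity m n N N' x y u =
      dirichletWeight 0 (fun i => ((∑ j, x i j : ℕ) : ℝ) + (y i : ℝ) + (1 + n) / 2) u.1 *
        ∏ i, dirichletWeight 0 (fun j => (x i j : ℝ) + 1 / 2) (u.2 i) := by
  have hhalf (t : ℝ) : t + 1 / 2 - 1 = t - 1 / 2 := by ring
  simp only [jeffreysDensity, dirichletWeight, hhalf]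

theorem bayes_estimator_direct_and_aggregated (m n N N' : ℕ)
    (hm : 1 ≤ m) (hn : 1 ≤ n) (hN : 1 ≤ N) (hN' : 1 ≤ N')
    (x : Fin (m+1) → Fin (n+1) → ℕ) (hx : ∑ i, ∑ j, x i j = N)
    (y : Fin (m+1) → ℕ) (hy : ∑ i, y i = N')
    (i₀ : Fin (m+1)) (j₀ : Fin (n+1)) :
    (∫ u in {u : ({i : Fin (m+1) // i ≠ 0} → ℝ) ×
          (Fin (m+1) → ({j : Fin (n+1) // j ≠ 0} → ℝ)) |
          u.1 ∈ simplexSet (0 : Fin (m+1)) ∧ ∀ i, u.2 i ∈ simplexSet (0 : Fin (n+1))},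
        (extendSimplex (0 : Fin (m+1)) u.1 i₀) *
          (extendSimplex (0 : Fin (n+1)) (u.2 i₀) j₀) * jeffreysDensity m n N N' x y u) /
      (∫ u in {u : ({i : Fin (m+1) // i ≠ 0} → ℝ) ×
          (Fin (m+1) → ({j : Fin (n+1) // j ≠ 0} → ℝ)) |
          u.1 ∈ simplexSet (0 : Fin (m+1)) ∧ ∀ i, u.2 i ∈ simplexSet (0 : Fin (n+1))},
        jeffreysDensity m n N N' x y u) =
      ((((∑ j, x i₀ j : ℕ) : ℝ) + (y i₀ : ℝ) + (1 + n) / 2) /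
          ((N : ℝ) + (N' : ℝ) + (1 + m) * (1 + n) / 2)) *
        (((x i₀ j₀ : ℝ) + 1/2) / (((∑ j, x i₀ j : ℕ) : ℝ) + (1 + n) / 2)) := by
  have hq : ∑ i, (((∑ j, x i j : ℕ) : ℝ) + (y i : ℝ) + (1 + n) / 2) =
      (N : ℝ) + (N' : ℝ) + (1 + m) * (1 + n) / 2 := by
    simp only [sum_add_distrib, sum_const, card_univ, Fintype.card_fin, ← Nat.cast_sum, hx, hy,
      nsmul_eq_mul]
    push_cast
    ring
  have hr : ∑ j, ((x i₀ j : ℝ) + 1 / 2) = ((∑ j, x i₀ j : ℕ) : ℝ) + (1 + n) / 2 := by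
    simp only [sum_add_distrib, sum_const, card_univ, Fintype.card_fin, ← Nat.cast_sum,
      nsmul_eq_mul]
    push_cast
    ring
  simp only [jeffreysDensity_eq_mul_prod_dirichletWeight]
  rw [mean_prod_dirichletWeight 0 0 (fun i => by positivity) (fun i j => by positivity), hq, hr]
end

section
/- Let m ≥ 1, n ≥ 3, N ≥ 1, N' ≥ 1 be integers, and let p* denote the uniform probability vector with p*_{i,j} = 1/((1+m)(1+n)) for all i, j. Then for every vector p = (p_{i,j}) of positive reals summing to 1, Δ_p(N, N') ≤ Δ_{p*}(N, N'). -/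
open Finset

/-- Binomial(N, q) probability mass function at `x`. -/
noncomputable def binPMF (N : ℕ) (q : ℝ) (x : ℕ) : ℝ :=
  (N.choose x : ℝ) * q ^ x * (1 - q) ^ (N - x)

/-- The entropy loss `L(d, p) = ∑ᵢ ∑ⱼ pᵢⱼ log (pᵢⱼ / dᵢⱼ)`. -/
noncomputable def entropyLoss {m n : ℕ} (d p : Fin (m+1) → Fin (n+1) → ℝ) : ℝ :=
  ∑ i, ∑ j, p i j * Real.log (p i j / d i j)

/-- Support of the Multinomial(N, p) distribution on (1+m)(1+n) cells. -/
def suppX (m n N : ℕ) : Finset (Fin (m+1) → Fin (n+1) → Fin (N+1)) :=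
  Finset.univ.filter fun x => ∑ i, ∑ j, (x i j : ℕ) = N

/-- Support of the Multinomial(N', p·) distribution on 1+m cells. -/
def suppY (m N' : ℕ) : Finset (Fin (m+1) → Fin (N'+1)) :=
  Finset.univ.filter fun y => ∑ i, (y i : ℕ) = N'

/-- Multinomial(N, p) probability of the outcome `x`. -/
noncomputable def wX {m n N : ℕ} (p : Fin (m+1) → Fin (n+1) → ℝ)
    (x : Fin (m+1) → Fin (n+1) → Fin (N+1)) : ℝ :=
  (Nat.multinomial Finset.univ (fun k : Fin (m+1) × Fin (n+1) => (x k.1 k.2 : ℕ)) : ℝ) *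
    ∏ i, ∏ j, p i j ^ (x i j : ℕ)

/-- Multinomial(N', (pᵢ.)ᵢ) probability of the outcome `y`, where `pᵢ. = ∑ⱼ pᵢⱼ`. -/
noncomputable def wY {m n N' : ℕ} (p : Fin (m+1) → Fin (n+1) → ℝ)
    (y : Fin (m+1) → Fin (N'+1)) : ℝ :=
  (Nat.multinomial Finset.univ (fun i => (y i : ℕ)) : ℝ) *
    ∏ i, (∑ j, p i j) ^ (y i : ℕ)

/-- The estimator `p̃` based on the direct observations only. -/
noncomputable def ptilde {m n N : ℕ} (x : Fin (m+1) → Fin (n+1) → Fin (N+1)) :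
    Fin (m+1) → Fin (n+1) → ℝ :=
  fun i j => ((x i j : ℝ) + 1/2) / ((N : ℝ) + (1 + m) * (1 + n) / 2)

/-- The estimator `p̂` based on the direct and aggregated observations. -/
noncomputable def phat {m n N N' : ℕ} (x : Fin (m+1) → Fin (n+1) → Fin (N+1))
    (y : Fin (m+1) → Fin (N'+1)) : Fin (m+1) → Fin (n+1) → ℝ :=
  fun i j =>
    ((((∑ j', (x i j' : ℕ)) : ℕ) : ℝ) + (y i : ℝ) + (1 + n) / 2) /
        ((N : ℝ) + (N' : ℝ) + (1 + m) * (1 + n) / 2) *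
      (((x i j : ℝ) + 1/2) / ((((∑ j', (x i j' : ℕ)) : ℕ) : ℝ) + (1 + n) / 2))

/-- The risk difference `Δ_p(N, N') = E_p[L(p̂, p)] − E_p[L(p̃, p)]`, the expectation being
a finite sum over the supports of the independent multinomial observations. -/
noncomputable def riskDiff (m n : ℕ) (p : Fin (m+1) → Fin (n+1) → ℝ) (N N' : ℕ) : ℝ :=
  ∑ x ∈ suppX m n N, ∑ y ∈ suppY m N',
    wX p x * wY p y * (entropyLoss (phat x y) p - entropyLoss (ptilde x) p)

open scoped fwdDiff

/-! Since `p̂` and `p̃` differ only by a factor depending on the row `i`, the risk difference is a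
constant minus `∑ᵢ φ(pᵢ)`, where `φ(q) = q (E log(B_{N+N'} + a) - E log(B_N + a))`, `B_M` is
`Binomial(M, q)` and `a = (1 + n) / 2`. If `φ` is convex, Jensen's inequality gives the claim.
Telescoping in `N'` writes `φ(q)` as a sum of terms `q² E Δlog(B_M + a)`. Each of them is a
positive multiple of `E h(B_{M+2})` with `h(x) = x (x - 1) log((x + a - 1) / (x + a - 2))`, and
`h` is convex on `[0, ∞)` when `a ≥ 2`. Binomial expectations preserve convexity, because
differentiating in `q` takes a forward difference of the integrand. -/

section BinomialMean

/-- The expectation of `f B`, where `B` has the `Binomial(N, q)` distribution. As a function of `q`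
it is the polynomial with Bernstein coefficients `f 0, …, f N`. -/
noncomputable def binomialMean (N : ℕ) (f : ℕ → ℝ) (q : ℝ) : ℝ :=
  ∑ k ∈ range (N + 1), binPMF N q k * f k

lemma binPMF_nonneg {q : ℝ} (hq : q ∈ Set.Icc (0 : ℝ) 1) (N k : ℕ) : 0 ≤ binPMF N q k :=
  mul_nonneg (mul_nonneg (Nat.cast_nonneg _) (pow_nonneg hq.1 _))
    (pow_nonneg (sub_nonneg.2 hq.2) _)

lemma binPMF_of_lt {N k : ℕ} (h : N < k) (q : ℝ) : binPMF N q k = 0 := by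
  simp [binPMF, Nat.choose_eq_zero_of_lt h]

lemma binPMF_succ_zero (N : ℕ) (q : ℝ) : binPMF (N + 1) q 0 = (1 - q) * binPMF N q 0 := by
  simp [binPMF, pow_succ']

lemma binPMF_succ_succ (N : ℕ) (q : ℝ) (k : ℕ) :
    binPMF (N + 1) q (k + 1) = (1 - q) * binPMF N q (k + 1) + q * binPMF N q k := by
  rcases lt_or_ge k N with hk | hk
  · obtain ⟨d, rfl⟩ := Nat.exists_eq_add_of_lt hk
    have h₁ : k + d + 1 - k = d + 1 := by omega
    have h₂ : k + d + 1 - (k + 1) = d := by omega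
    simp only [binPMF, Nat.choose_succ_succ, Nat.succ_eq_add_one, Nat.add_sub_add_right, h₁, h₂,
      Nat.cast_add]
    ring
  · rw [binPMF_of_lt (Nat.lt_succ_of_le hk)]
    simp only [binPMF, Nat.choose_succ_succ, Nat.choose_eq_zero_of_lt (Nat.lt_succ_of_le hk),
      Nat.add_sub_add_right, add_zero]
    ring

lemma succ_mul_binPMF_succ (N : ℕ) (q : ℝ) (k : ℕ) :
    ((k : ℝ) + 1) * binPMF (N + 1) q (k + 1) = (N + 1) * q * binPMF N q k := by
  have h : ((N : ℝ) + 1) * N.choose k = (N + 1).choose (k + 1) * (k + 1) := by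
    exact_mod_cast Nat.add_one_mul_choose_eq N k
  simp only [binPMF, Nat.add_sub_add_right]
  linear_combination -(q ^ (k + 1) * (1 - q) ^ (N - k)) * h

lemma binomialMean_zero (f : ℕ → ℝ) (q : ℝ) : binomialMean 0 f q = f 0 := by
  simp [binomialMean, binPMF]

lemma binomialMean_succ (N : ℕ) (f : ℕ → ℝ) (q : ℝ) :
    binomialMean (N + 1) f q =
      (1 - q) * binomialMean N f q + q * binomialMean N (fun k => f (k + 1)) q := by
  have hN : binomialMean N f q =
      ∑ k ∈ range (N + 1), binPMF N q (k + 1) * f (k + 1) + binPMF N q 0 * f 0 := by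
    rw [← sum_range_succ' (fun k => binPMF N q k * f k), sum_range_succ,
      binPMF_of_lt N.lt_succ_self, zero_mul, add_zero, binomialMean]
  rw [hN, binomialMean, binomialMean, sum_range_succ', binPMF_succ_zero]
  simp only [binPMF_succ_succ, add_mul, sum_add_distrib, mul_add, mul_sum, mul_assoc]
  ring

lemma binomialMean_sub (N : ℕ) (f g : ℕ → ℝ) (q : ℝ) :
    binomialMean N (fun k => f k - g k) q = binomialMean N f q - binomialMean N g q := by
  simp only [binomialMean, mul_sub, sum_sub_distrib]

lemma binomialMean_const (N : ℕ) (c q : ℝ) : binomialMean N (fun _ => c) q = c := by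
  induction N with
  | zero => exact binomialMean_zero _ q
  | succ N ih => rw [binomialMean_succ, ih]; ring

lemma binomialMean_nonneg {f : ℕ → ℝ} (hf : ∀ k, 0 ≤ f k) (N : ℕ) {q : ℝ}
    (hq : q ∈ Set.Icc (0 : ℝ) 1) : 0 ≤ binomialMean N f q :=
  sum_nonneg fun k _ => mul_nonneg (binPMF_nonneg hq N k) (hf k)

lemma binomialMean_succ_sub_binomialMean (N : ℕ) (f : ℕ → ℝ) (q : ℝ) :
    binomialMean (N + 1) f q - binomialMean N f q = q * binomialMean N (Δ_[1] f) q := by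
  have hΔ : binomialMean N (Δ_[1] f) q =
      binomialMean N (fun k => f (k + 1)) q - binomialMean N f q := binomialMean_sub N _ f q
  rw [binomialMean_succ]
  linear_combination -q * hΔ

lemma binomialMean_binomialMean_add (N N' : ℕ) (f : ℕ → ℝ) (q : ℝ) :
    binomialMean N (fun k => binomialMean N' (fun l => f (k + l)) q) q =
      binomialMean (N + N') f q := by
  induction N generalizing f with
  | zero => simp only [binomialMean_zero, zero_add]
  | succ N ih =>
    rw [add_right_comm, binomialMean_succ, binomialMean_succ, ih, ← ih fun k => f (k + 1)]
    simp only [add_right_comm]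

lemma binomialMean_binomialMean_const_sub_sub (N N' : ℕ) (c : ℝ) (f : ℕ → ℝ) (q : ℝ) :
    binomialMean N (fun k => binomialMean N' (fun l => c - (f (k + l) - f k)) q) q =
      c - (binomialMean (N + N') f q - binomialMean N f q) := by
  simp only [binomialMean_sub, binomialMean_const, binomialMean_binomialMean_add]

lemma binomialMean_succ_natCast_mul (N : ℕ) (g : ℕ → ℝ) (q : ℝ) :
    binomialMean (N + 1) (fun k => k * g k) q =
      (N + 1) * q * binomialMean N (fun k => g (k + 1)) q := by
  rw [binomialMean, sum_range_succ', binomialMean, mul_sum, Nat.cast_zero, zero_mul, mul_zero,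
    add_zero]
  refine sum_congr rfl fun k _ => ?_
  push_cast
  linear_combination g (k + 1) * succ_mul_binPMF_succ N q k

lemma binomialMean_add_two_natCast_mul_pred (N : ℕ) (g : ℕ → ℝ) (q : ℝ) :
    binomialMean (N + 2) (fun k => k * ((k - 1) * g k)) q =
      (N + 2) * (N + 1) * (q ^ 2 * binomialMean N (fun k => g (k + 2)) q) := by
  rw [binomialMean_succ_natCast_mul (N + 1) (fun k => (k - 1) * g k)]
  simp only [Nat.cast_add, Nat.cast_one, add_sub_cancel_right]
  rw [binomialMean_succ_natCast_mul N fun k => g (k + 1)]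
  ring

lemma hasDerivAt_binomialMean (N : ℕ) (f : ℕ → ℝ) (q : ℝ) :
    HasDerivAt (binomialMean N f) (N * binomialMean (N - 1) (Δ_[1] f) q) q := by
  induction N generalizing f with
  | zero =>
    have h0 : binomialMean 0 f = fun _ => f 0 := funext (binomialMean_zero f)
    simpa [h0] using hasDerivAt_const q (f 0)
  | succ N ih =>
    have hrec : binomialMean (N + 1) f = fun q =>
        (1 - q) * binomialMean N f q + q * binomialMean N (fun k => f (k + 1)) q :=
      funext (binomialMean_succ N f)
    have hΔ : binomialMean N (Δ_[1] f) q =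
        binomialMean N (fun k => f (k + 1)) q - binomialMean N f q := binomialMean_sub N _ f q
    have hΔrec : (N : ℝ) * binomialMean N (Δ_[1] f) q =
        N * ((1 - q) * binomialMean (N - 1) (Δ_[1] f) q +
          q * binomialMean (N - 1) (Δ_[1] fun k => f (k + 1)) q) := by
      rcases N with _ | N
      · simp
      · rw [binomialMean_succ]; rfl
    rw [hrec]
    refine ((((hasDerivAt_id q).const_sub 1).mul (ih f)).add
      ((hasDerivAt_id q).mul (ih fun k => f (k + 1)))).congr_deriv ?_
    simp only [id, Nat.add_sub_cancel]
    push_cast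
    linear_combination -hΔ - hΔrec

lemma convexOn_binomialMean {f : ℕ → ℝ} (hf : ∀ k, 0 ≤ Δ_[1] (Δ_[1] f) k) (N : ℕ) :
    ConvexOn ℝ (Set.Icc 0 1) (binomialMean N f) := by
  refine convexOn_of_hasDerivWithinAt2_nonneg (convex_Icc 0 1)
    (fun q _ => (hasDerivAt_binomialMean N f q).continuousAt.continuousWithinAt)
    (fun q _ => (hasDerivAt_binomialMean N f q).hasDerivWithinAt)
    (fun q _ => ((hasDerivAt_binomialMean (N - 1) _ q).const_mul _).hasDerivWithinAt)
    fun q hq => ?_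
  have := binomialMean_nonneg hf (N - 1 - 1) (interior_subset hq)
  positivity

end BinomialMean

section Convexity

lemma two_div_two_mul_add_one_le_log_sub_log {u : ℝ} (hu : 0 < u) :
    2 / (2 * u + 1) ≤ Real.log (u + 1) - Real.log u :=
  calc 2 / (2 * u + 1) = 2 * u⁻¹ / (u⁻¹ + 2) := by field_simp; ring
    _ ≤ Real.log (1 + u⁻¹) := Real.le_log_one_add_of_nonneg (by positivity)
    _ = Real.log (u + 1) - Real.log u := by
      rw [← Real.log_div (by positivity) hu.ne']
      congr 1
      field_simp

lemma hasDerivAt_log_add_one_sub_log {u : ℝ} (hu : 0 < u) :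
    HasDerivAt (fun u => Real.log (u + 1) - Real.log u) ((u + 1)⁻¹ - u⁻¹) u :=
  ((Real.hasDerivAt_log (by positivity)).comp_add_const u 1).sub (Real.hasDerivAt_log hu.ne')

lemma hasDerivAt_inv_add_one_sub_inv {u : ℝ} (hu : 0 < u) :
    HasDerivAt (fun u => (u + 1)⁻¹ - u⁻¹) ((u ^ 2)⁻¹ - ((u + 1) ^ 2)⁻¹) u :=
  (((hasDerivAt_inv (by positivity)).comp_add_const u 1).sub (hasDerivAt_inv hu.ne')).congr_deriv
    (by ring)

-- This is the second derivative of `x (x - 1) (log (x + b + 1) - log (x + b))` at `u = x + b`, with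
-- the difference of logarithms replaced by its lower bound. Over a common denominator the numerator
-- factors.
lemma second_deriv_lower_bound_nonneg {x u : ℝ} (hx : 0 < x) (hxu : x ≤ u) :
    0 ≤ 2 * (2 / (2 * u + 1)) + 2 * (2 * x - 1) * ((u + 1)⁻¹ - u⁻¹) +
      x * (x - 1) * ((u ^ 2)⁻¹ - ((u + 1) ^ 2)⁻¹) := by
  have hu : 0 < u := hx.trans_le hxu
  have h₁ : 0 ≤ 2 * u * (u + 1) - x * (2 * u + 1) := by nlinarith
  have h₂ : 0 ≤ 2 * u * (u + 1) - (x - 1) * (2 * u + 1) := by nlinarith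
  calc 0 ≤ (2 * u * (u + 1) - x * (2 * u + 1)) * (2 * u * (u + 1) - (x - 1) * (2 * u + 1)) /
        ((2 * u + 1) * u ^ 2 * (u + 1) ^ 2) := by positivity
    _ = _ := by field_simp; ring

lemma continuousOn_mul_log_add {b : ℝ} (hb : 0 ≤ b) :
    ContinuousOn (fun x => x * Real.log (x + b)) (Set.Ici 0) := by
  rcases hb.eq_or_lt with rfl | hb
  · simpa using Real.continuous_mul_log.continuousOn
  · exact continuousOn_id.mul ((continuousOn_id.add continuousOn_const).log
      fun x hx => (add_pos_of_nonneg_of_pos hx hb).ne')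

lemma continuousOn_mul_pred_mul_log_sub_log {b : ℝ} (hb : 0 ≤ b) :
    ContinuousOn (fun x => x * ((x - 1) * (Real.log (x + b + 1) - Real.log (x + b))))
      (Set.Ici 0) := by
  refine ((continuousOn_id.sub (continuousOn_const (c := (1 : ℝ)))).mul
    ((continuousOn_mul_log_add (add_nonneg hb zero_le_one)).sub
      (continuousOn_mul_log_add hb))).congr fun x _ => ?_
  simp only [Pi.mul_apply, Pi.sub_apply, id, add_assoc]
  ring

lemma convexOn_mul_pred_mul_log_sub_log {b : ℝ} (hb : 0 ≤ b) :
    ConvexOn ℝ (Set.Ici 0)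
      (fun x => x * ((x - 1) * (Real.log (x + b + 1) - Real.log (x + b)))) := by
  have hpos {x : ℝ} (hx : x ∈ interior (Set.Ici 0)) : 0 < x := by simpa using hx
  have hfactor (x : ℝ) : HasDerivAt (fun x : ℝ => x * (x - 1)) (2 * x - 1) x :=
    ((hasDerivAt_id x).mul ((hasDerivAt_id x).sub_const 1)).congr_deriv (by simp only [id]; ring)
  refine convexOn_of_hasDerivWithinAt2_nonneg (convex_Ici 0)
    (f' := fun x => (2 * x - 1) * (Real.log (x + b + 1) - Real.log (x + b)) +
      x * (x - 1) * ((x + b + 1)⁻¹ - (x + b)⁻¹))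
    (f'' := fun x => 2 * (Real.log (x + b + 1) - Real.log (x + b)) +
      2 * (2 * x - 1) * ((x + b + 1)⁻¹ - (x + b)⁻¹) +
      x * (x - 1) * (((x + b) ^ 2)⁻¹ - ((x + b + 1) ^ 2)⁻¹))
    (continuousOn_mul_pred_mul_log_sub_log hb) (fun x hx => ?_) (fun x hx => ?_) fun x hx => ?_
  all_goals
    have hx0 : 0 < x := hpos hx
    have hxb : 0 < x + b := by positivity
  · simp only [← mul_assoc]
    exact ((hfactor x).mul
      ((hasDerivAt_log_add_one_sub_log hxb).comp_add_const x b)).hasDerivWithinAt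
  · refine (((((hasDerivAt_id x).const_mul 2).sub_const 1).mul
      ((hasDerivAt_log_add_one_sub_log hxb).comp_add_const x b)).add ((hfactor x).mul
      ((hasDerivAt_inv_add_one_sub_inv hxb).comp_add_const x b))).congr_deriv ?_
      |>.hasDerivWithinAt
    simp only [id]
    ring
  · linarith [second_deriv_lower_bound_nonneg hx0 (le_add_of_nonneg_right hb),
      two_div_two_mul_add_one_le_log_sub_log hxb]

lemma fwdDiff_fwdDiff_natCast_nonneg {f : ℝ → ℝ} (hf : ConvexOn ℝ (Set.Ici 0) f) (k : ℕ) :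
    0 ≤ Δ_[1] (Δ_[1] fun k : ℕ => f k) k := by
  have hk : (k : ℝ) ∈ Set.Ici 0 := Set.mem_Ici.2 k.cast_nonneg
  have hk₂ : (k : ℝ) + 2 ∈ Set.Ici 0 := Set.mem_Ici.2 (by positivity)
  have hmid := hf.2 hk hk₂ one_half_pos.le one_half_pos.le (add_halves 1)
  have hcenter : (1 / 2 : ℝ) • (k : ℝ) + (1 / 2 : ℝ) • ((k : ℝ) + 2) = k + 1 := by
    simp only [smul_eq_mul]; ring
  rw [hcenter, smul_eq_mul, smul_eq_mul] at hmid
  simp only [fwdDiff, add_assoc, one_add_one_eq_two, Nat.cast_add, Nat.cast_one, Nat.cast_ofNat]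
  linarith

/-- The function `φ` of the row probability `q` whose sum over the rows is, up to sign and an
additive constant, the risk difference: `q` times the increase of the expectation of `log (B + a)`
when the number of trials of the binomial variable `B` grows from `N` to `N + N'`. -/
noncomputable def expectedLogGain (a : ℝ) (N N' : ℕ) (q : ℝ) : ℝ :=
  q * (binomialMean (N + N') (fun k => Real.log (k + a)) q -
    binomialMean N (fun k => Real.log (k + a)) q)

lemma expectedLogGain_succ (a : ℝ) (N N' : ℕ) (q : ℝ) :
    expectedLogGain a N (N' + 1) q = expectedLogGain a N N' q +
      q ^ 2 * binomialMean (N + N') (Δ_[1] fun k : ℕ => Real.log (k + a)) q := by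
  have h := binomialMean_succ_sub_binomialMean (N + N') (fun k => Real.log (k + a)) q
  rw [expectedLogGain, expectedLogGain, ← add_assoc]
  linear_combination q * h

lemma convexOn_sq_mul_binomialMean_fwdDiff_log {a : ℝ} (ha : 2 ≤ a) (M : ℕ) :
    ConvexOn ℝ (Set.Icc 0 1)
      (fun q => q ^ 2 * binomialMean M (Δ_[1] fun k : ℕ => Real.log (k + a)) q) := by
  have hconv := (convexOn_binomialMean (fwdDiff_fwdDiff_natCast_nonneg
    (convexOn_mul_pred_mul_log_sub_log (sub_nonneg.2 ha))) (M + 2)).smul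
    (c := ((M + 2 : ℝ) * (M + 1))⁻¹) (by positivity)
  refine hconv.congr fun q _ => ?_
  have hshift : (Δ_[1] fun k : ℕ => Real.log (k + a)) = fun k : ℕ =>
      Real.log (((k + 2 : ℕ) : ℝ) + (a - 2) + 1) - Real.log (((k + 2 : ℕ) : ℝ) + (a - 2)) := by
    ext k
    simp only [fwdDiff]
    push_cast
    ring_nf
  beta_reduce
  rw [hshift, smul_eq_mul, binomialMean_add_two_natCast_mul_pred M
    (fun k => Real.log (k + (a - 2) + 1) - Real.log (k + (a - 2)))]
  field_simp

lemma convexOn_expectedLogGain {a : ℝ} (ha : 2 ≤ a) (N N' : ℕ) :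
    ConvexOn ℝ (Set.Icc 0 1) (expectedLogGain a N N') := by
  induction N' with
  | zero => exact (convexOn_const 0 (convex_Icc 0 1)).congr fun q _ => by simp [expectedLogGain]
  | succ N' ih =>
    exact (ih.add (convexOn_sq_mul_binomialMean_fwdDiff_log ha (N + N'))).congr
      fun q _ => (expectedLogGain_succ a N N' q).symm

lemma card_mul_map_average_le_sum {ι E : Type*} [Fintype ι] [Nonempty ι] [AddCommGroup E]
    [Module ℝ E] {s : Set E} {φ : E → ℝ} (hφ : ConvexOn ℝ s φ) {x : ι → E} (hx : ∀ i, x i ∈ s) :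
    Fintype.card ι * φ ((Fintype.card ι : ℝ)⁻¹ • ∑ i, x i) ≤ ∑ i, φ (x i) := by
  have hcard : (0 : ℝ) < Fintype.card ι := by exact_mod_cast Fintype.card_pos
  have hjensen := hφ.map_sum_le (t := univ) (w := fun _ => (Fintype.card ι : ℝ)⁻¹) (p := x)
    (fun _ _ => by positivity) (by simp [hcard.ne']) fun i _ => hx i
  rwa [← smul_sum, ← smul_sum, smul_eq_mul, ← div_eq_inv_mul, le_div_iff₀' hcard] at hjensen

end Convexity

section Marginals

variable {ι : Type*} [Fintype ι] [DecidableEq ι]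

open Polynomial in
lemma coeff_C_mul_X_add_C_pow {R : Type*} [CommSemiring R] (a b : R) (N j : ℕ) :
    ((C a * X + C b) ^ N).coeff j = N.choose j * a ^ j * b ^ (N - j) := by
  have hcomp : (C a * X + C b) ^ N = ((X + C b) ^ N).comp (C a * X) := by simp
  rw [hcomp, comp_C_mul_X_coeff, coeff_X_add_C_pow]
  ring

-- Both sides are the coefficient of `X ^ j` in `(∑ k ∈ S, w k * X + ∑ k ∈ Sᶜ, w k) ^ N`.
open Polynomial in
lemma sum_multinomial_mul_prod_pow_of_sum_eq {R : Type*} [CommSemiring R] (w : ι → R)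
    (S : Finset ι) (N j : ℕ) :
    ∑ x ∈ piAntidiag univ N with ∑ k ∈ S, x k = j,
        (Nat.multinomial univ x : R) * ∏ k, w k ^ x k =
      N.choose j * (∑ k ∈ S, w k) ^ j * (∑ k ∈ Sᶜ, w k) ^ (N - j) := by
  have hbase : ∑ k, C (w k) * (if k ∈ S then X else 1) =
      C (∑ k ∈ S, w k) * X + C (∑ k ∈ Sᶜ, w k) := by
    simp only [mul_ite, mul_one, sum_ite, filter_mem_eq_inter, univ_inter, filter_not,
      ← compl_eq_univ_sdiff, map_sum, sum_mul]
  have hmonomial (x : ι → ℕ) : ∏ k, (C (w k) * (if k ∈ S then X else 1)) ^ x k =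
      C (∏ k, w k ^ x k) * X ^ ∑ k ∈ S, x k := by
    simp only [mul_pow, prod_mul_distrib, map_prod, map_pow, ite_pow, one_pow, prod_ite_mem,
      univ_inter, prod_pow_eq_pow_sum]
  calc _ = ((∑ k, C (w k) * (if k ∈ S then X else 1)) ^ N).coeff j := by
        simp only [sum_pow_eq_sum_piAntidiag, hmonomial, finsetSum_coeff, ← C_eq_natCast,
          ← mul_assoc, ← C_mul, coeff_C_mul_X_pow, sum_filter, eq_comm (a := j)]
    _ = _ := by rw [hbase, coeff_C_mul_X_add_C_pow]

lemma sum_multinomial_mul_comp_sum {w : ι → ℝ} (hw : ∑ k, w k = 1) (S : Finset ι) (N : ℕ)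
    (G : ℕ → ℝ) :
    ∑ x ∈ piAntidiag univ N, (Nat.multinomial univ x : ℝ) * (∏ k, w k ^ x k) * G (∑ k ∈ S, x k) =
      binomialMean N G (∑ k ∈ S, w k) := by
  have hmaps : ∀ x ∈ piAntidiag (univ : Finset ι) N, ∑ k ∈ S, x k ∈ range (N + 1) := fun x hx =>
    mem_range_succ_iff.2 ((sum_le_univ_sum_of_nonneg fun _ => Nat.zero_le _).trans_eq
      (mem_piAntidiag.1 hx).1)
  have hcompl : ∑ k ∈ Sᶜ, w k = 1 - ∑ k ∈ S, w k := by
    rw [← hw, ← sum_add_sum_compl S, add_sub_cancel_left]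
  rw [← sum_fiberwise_of_maps_to hmaps, binomialMean]
  refine sum_congr rfl fun j _ => ?_
  rw [binPMF, ← hcompl, ← sum_multinomial_mul_prod_pow_of_sum_eq, sum_mul]
  exact sum_congr rfl fun x hx => by rw [(mem_filter.1 hx).2]

lemma sum_fin_filter_eq_sum_piAntidiag {M : Type*} [AddCommMonoid M] (N : ℕ)
    (F : (ι → ℕ) → M) :
    ∑ x : ι → Fin (N + 1) with ∑ k, (x k : ℕ) = N, F (fun k => x k) =
      ∑ x ∈ piAntidiag univ N, F x := by
  refine sum_bij (fun x _ k => (x k : ℕ)) (fun x hx => ?_) (fun x _ y _ hxy => ?_)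
    (fun y hy => ?_) fun _ _ => rfl
  · simpa using hx
  · exact funext fun k => Fin.ext (congr_fun hxy k)
  · have hsum : ∑ k, y k = N := by simpa using hy
    have hlt (k : ι) : y k < N + 1 :=
      Nat.lt_succ_of_le ((single_le_sum_of_canonicallyOrdered (mem_univ k)).trans_eq hsum)
    exact ⟨fun k => ⟨y k, hlt k⟩, by simpa using hsum, rfl⟩

end Marginals

section RiskDifference

variable {m n N N' : ℕ} {p : Fin (m + 1) → Fin (n + 1) → ℝ}

lemma sum_suppX_eq_sum_piAntidiag {M : Type*} [AddCommMonoid M]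
    (F : (Fin (m + 1) × Fin (n + 1) → ℕ) → M) :
    ∑ x ∈ suppX m n N, F (fun k => x k.1 k.2) = ∑ x ∈ piAntidiag univ N, F x := by
  rw [← sum_fin_filter_eq_sum_piAntidiag]
  exact sum_equiv (Equiv.curry _ _ _).symm
    (fun x => by simp [suppX, Fintype.sum_prod_type, Function.uncurry]) fun _ _ => rfl

lemma sum_wX_mul_row_sum (hsum : ∑ i, ∑ j, p i j = 1) (G : ℕ → ℝ) (i : Fin (m + 1)) :
    ∑ x ∈ suppX m n N, wX p x * G (∑ j, (x i j : ℕ)) = binomialMean N G (∑ j, p i j) := by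
  have hmarginal := sum_multinomial_mul_comp_sum (w := fun k : Fin (m + 1) × Fin (n + 1) =>
    p k.1 k.2) (by rwa [Fintype.sum_prod_type]) ({i} ×ˢ univ) N G
  simp only [← sum_suppX_eq_sum_piAntidiag, sum_product, sum_singleton,
    Fintype.prod_prod_type] at hmarginal
  exact hmarginal

lemma sum_wY_mul_apply (hsum : ∑ i, ∑ j, p i j = 1) (G : ℕ → ℝ) (i : Fin (m + 1)) :
    ∑ y ∈ suppY m N', wY p y * G (y i) = binomialMean N' G (∑ j, p i j) := by
  have hmarginal := sum_multinomial_mul_comp_sum (w := fun k => ∑ j, p k j) hsum {i} N' G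
  simp only [← sum_fin_filter_eq_sum_piAntidiag, sum_singleton] at hmarginal
  exact hmarginal

lemma sum_wX_mul_wY_mul (hsum : ∑ i, ∑ j, p i j = 1) (F : ℕ → ℕ → ℝ) (i : Fin (m + 1)) :
    ∑ x ∈ suppX m n N, ∑ y ∈ suppY m N', wX p x * wY p y * F (∑ j, (x i j : ℕ)) (y i) =
      binomialMean N (fun k => binomialMean N' (F k) (∑ j, p i j)) (∑ j, p i j) := by
  simp only [mul_assoc, ← mul_sum, sum_wY_mul_apply hsum]
  exact sum_wX_mul_row_sum hsum (fun k => binomialMean N' (F k) (∑ j, p i j)) i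

lemma entropyLoss_sub_entropyLoss {d d' : Fin (m + 1) → Fin (n + 1) → ℝ} (hd : ∀ i j, d i j ≠ 0)
    (hd' : ∀ i j, d' i j ≠ 0) (p : Fin (m + 1) → Fin (n + 1) → ℝ) :
    entropyLoss d p - entropyLoss d' p =
      ∑ i, ∑ j, p i j * (Real.log (d' i j) - Real.log (d i j)) := by
  simp only [entropyLoss, ← sum_sub_distrib, ← mul_sub]
  refine sum_congr rfl fun i _ => sum_congr rfl fun j _ => ?_
  rcases eq_or_ne (p i j) 0 with h | h
  · simp only [h, zero_mul]
  · rw [Real.log_div h (hd i j), Real.log_div h (hd' i j), sub_sub_sub_cancel_left]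

lemma ptilde_pos (x : Fin (m + 1) → Fin (n + 1) → Fin (N + 1)) (i : Fin (m + 1))
    (j : Fin (n + 1)) : 0 < ptilde x i j := by
  unfold ptilde
  positivity

lemma phat_pos (x : Fin (m + 1) → Fin (n + 1) → Fin (N + 1)) (y : Fin (m + 1) → Fin (N' + 1))
    (i : Fin (m + 1)) (j : Fin (n + 1)) : 0 < phat x y i j := by
  unfold phat
  positivity

/-- The part of the risk difference that does not depend on `p`: the logarithm of the ratio of the
normalizing denominators of `p̂` and `p̃`. -/
noncomputable def logNormalizerRatio (m n N N' : ℕ) : ℝ :=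
  Real.log ((N : ℝ) + N' + (1 + m) * (1 + n) / 2) - Real.log ((N : ℝ) + (1 + m) * (1 + n) / 2)

lemma log_ptilde_sub_log_phat (x : Fin (m + 1) → Fin (n + 1) → Fin (N + 1))
    (y : Fin (m + 1) → Fin (N' + 1)) (i : Fin (m + 1)) (j : Fin (n + 1)) :
    Real.log (ptilde x i j) - Real.log (phat x y i j) = logNormalizerRatio m n N N' -
      (Real.log (((∑ j, (x i j : ℕ) + y i : ℕ) : ℝ) + (1 + n) / 2) -
        Real.log (((∑ j, (x i j : ℕ) : ℕ) : ℝ) + (1 + n) / 2)) := by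
  rw [ptilde, phat, logNormalizerRatio, Nat.cast_add, Real.log_mul, Real.log_div, Real.log_div,
    Real.log_div]
  · ring
  all_goals positivity

lemma entropyLoss_phat_sub_entropyLoss_ptilde (p : Fin (m + 1) → Fin (n + 1) → ℝ)
    (x : Fin (m + 1) → Fin (n + 1) → Fin (N + 1)) (y : Fin (m + 1) → Fin (N' + 1)) :
    entropyLoss (phat x y) p - entropyLoss (ptilde x) p =
      ∑ i, (∑ j, p i j) * (logNormalizerRatio m n N N' -
        (Real.log (((∑ j, (x i j : ℕ) + y i : ℕ) : ℝ) + (1 + n) / 2) -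
          Real.log (((∑ j, (x i j : ℕ) : ℕ) : ℝ) + (1 + n) / 2))) := by
  rw [entropyLoss_sub_entropyLoss (fun i j => (phat_pos x y i j).ne')
    fun i j => (ptilde_pos x i j).ne']
  simp only [log_ptilde_sub_log_phat, ← sum_mul]

lemma riskDiff_eq_sub_sum_expectedLogGain (hsum : ∑ i, ∑ j, p i j = 1) (N N' : ℕ) :
    riskDiff m n p N N' = logNormalizerRatio m n N N' -
      ∑ i, expectedLogGain ((1 + n) / 2) N N' (∑ j, p i j) := by
  set c := logNormalizerRatio m n N N' with hc
  set f : ℕ → ℝ := fun k => Real.log (k + (1 + n) / 2) with hf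
  calc riskDiff m n p N N'
      = ∑ i, (∑ j, p i j) * ∑ x ∈ suppX m n N, ∑ y ∈ suppY m N', wX p x * wY p y *
          (c - (f (∑ j, (x i j : ℕ) + y i) - f (∑ j, (x i j : ℕ)))) := by
        simp only [riskDiff, entropyLoss_phat_sub_entropyLoss_ptilde, ← hc, hf,
          mul_sum (univ : Finset (Fin (m + 1)))]
        simp only [sum_comm (t := (univ : Finset (Fin (m + 1)))), mul_sum (suppX m n N),
          mul_sum (suppY m N'), mul_left_comm (∑ j, p _ j)]
    _ = ∑ i, (∑ j, p i j) * (c - (binomialMean (N + N') f (∑ j, p i j) -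
          binomialMean N f (∑ j, p i j))) := by
        refine sum_congr rfl fun i _ => ?_
        rw [sum_wX_mul_wY_mul hsum fun k l => c - (f (k + l) - f k),
          binomialMean_binomialMean_const_sub_sub]
    _ = c - ∑ i, expectedLogGain ((1 + n) / 2) N N' (∑ j, p i j) := by
        simp only [mul_sub, expectedLogGain, sum_sub_distrib, ← sum_mul, hsum, one_mul, hf]

end RiskDifference

theorem risk_difference_maximized_at_uniform_general (m n N N' : ℕ)
    (hm : 1 ≤ m) (hn : 3 ≤ n) (hN : 1 ≤ N) (hN' : 1 ≤ N')
    (p : Fin (m+1) → Fin (n+1) → ℝ) (hp : ∀ i j, 0 < p i j)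
    (hsum : ∑ i, ∑ j, p i j = 1) :
    riskDiff m n p N N' ≤
      riskDiff m n (fun _ _ => 1 / ((1 + (m : ℝ)) * (1 + (n : ℝ)))) N N' := by
  have ha : (2 : ℝ) ≤ (1 + n) / 2 := by
    have : (3 : ℝ) ≤ n := by exact_mod_cast hn
    linarith
  have hrow (i : Fin (m + 1)) : ∑ j, p i j ∈ Set.Icc (0 : ℝ) 1 := by
    have hnonneg (i : Fin (m + 1)) : 0 ≤ ∑ j, p i j := sum_nonneg fun j _ => (hp i j).le
    exact ⟨hnonneg i, hsum ▸ single_le_sum (fun i _ => hnonneg i) (mem_univ i)⟩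
  have huniform : ∑ _j : Fin (n + 1), 1 / ((1 + (m : ℝ)) * (1 + n)) = (1 + (m : ℝ))⁻¹ := by
    simp only [sum_const, card_univ, Fintype.card_fin, nsmul_eq_mul]
    push_cast
    field_simp
    ring
  have hjensen := card_mul_map_average_le_sum (convexOn_expectedLogGain ha N N') hrow
  rw [riskDiff_eq_sub_sum_expectedLogGain hsum, riskDiff_eq_sub_sum_expectedLogGain]
  · refine sub_le_sub_left ?_ _
    simp only [huniform]
    simpa [hsum, add_comm] using hjensen
  · simp only [huniform, sum_const, card_univ, Fintype.card_fin, nsmul_eq_mul]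
    push_cast
    field_simp
    ring
end
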